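/- Let h be an n×n complex matrix with s − h†sh positive definite, set m = h s h† s, and suppose v ∈ ℂⁿ is nonzero with m v = λ v for some λ ∈ ℂ. Then λ is real, λ ≠ 1, and v† s v ≠ 0; moreover, if v† s v > 0 then λ < 1, and if v† s v < 0 then λ > 1. -/

import Mathlib

open Matrix
open scoped ComplexOrder

/-- The signature matrix `s = diag(1,…,1,−1,…,−1)` with `p` entries `+1` and `q`
entries `−1`. -/
noncomputable def sMat (p q : ℕ) : Matrix (Fin (p + q)) (Fin (p + q)) ℂ :=
  Matrix.diagonal (fun i => if (i : ℕ) < p then 1 else -1)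

/-!
Let `s` be Hermitian with `s - hᴴ s h` positive definite. A fixed vector `x ≠ 0` of `h` would
satisfy `x† (s - hᴴ s h) x = 0`, so `u = 1 - h` is invertible; likewise `s u y = 0` forces
`y† (s - hᴴ s h) y = 0`, so `s` is invertible. Substituting `h = 1 - u` shows that
`s⁻¹ - h s⁻¹ hᴴ` and `s - hᴴ s h` are congruent through `t = u s⁻¹ (uᴴ)⁻¹`:
`t (uᴴ s + s u - uᴴ s u) tᴴ = s⁻¹ uᴴ + u s⁻¹ - u s⁻¹ uᴴ`. Hence `s⁻¹ - h s⁻¹ hᴴ`, and with it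
`s - s m` for `m = h s⁻¹ hᴴ s`, is positive definite too.
Evaluating the latter at an eigenvector `v` of `m` gives `0 < (1 - λ) (v† s v)`, where `v† s v` is
real; everything follows from the sign of this product.
-/

theorem inv_sub_mul_inv_mul_star_eq_conjugate {R : Type*} [Ring R] [StarRing R] {s u : Rˣ}
    (hs : star s = s) {h : R} (hu : (u : R) = 1 - h) :
    (↑s⁻¹ - h * ↑s⁻¹ * star h : R) =
      ↑(u * s⁻¹ * (star u)⁻¹) * (s - star h * s * h) * star ↑(u * s⁻¹ * (star u)⁻¹) := by
  obtain rfl : h = 1 - u := by rw [hu, sub_sub_cancel]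
  have star_conjugator : star (u * s⁻¹ * (star u)⁻¹) = u⁻¹ * s⁻¹ * star u := by
    simp only [star_mul, star_inv, star_star, hs, mul_assoc]
  rw [← Units.coe_star, star_conjugator]
  simp only [star_sub, star_one, ← Units.coe_star, Units.val_mul]
  have sub_expand : (s - (1 - ↑(star u)) * s * (1 - u) : R) =
      ↑(star u) * s + s * u - ↑(star u) * (s * u) := by
    noncomm_ring
  rw [sub_expand]
  simp only [mul_add, mul_sub, add_mul, sub_mul, one_mul, mul_one, mul_assoc,
    Units.mul_inv_cancel_left, Units.inv_mul_cancel_left, Units.inv_mul]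
  abel

/-- The matrix `h` strictly decreases the sesquilinear form `x ↦ x† s x`, in the sense that
`s - hᴴ s h` is positive definite; the form `s` may be indefinite. For `s = sMat p q` this is the
condition defining the set `H_{p,q}`. -/
def IsStrictContraction {n R : Type*} [Fintype n] [Ring R] [PartialOrder R] [StarRing R]
    (s h : Matrix n n R) : Prop :=
  (s - hᴴ * s * h).PosDef

namespace IsStrictContraction

section Ring

variable {n R : Type*} [Fintype n] [Ring R] [PartialOrder R] [StarRing R] {s h : Matrix n n R}

theorem sub_dotProduct_mulVec_pos (hh : IsStrictContraction s h) {x : n → R} (hx : x ≠ 0) :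
    0 < star x ⬝ᵥ (s *ᵥ x) - star (h *ᵥ x) ⬝ᵥ (s *ᵥ (h *ᵥ x)) := by
  simpa only [sub_mulVec, dotProduct_sub, mul_assoc, ← mulVec_mulVec, dotProduct_mulVec _ hᴴ,
    ← star_mulVec] using hh.dotProduct_mulVec_pos hx

end Ring

section Field

variable {n K : Type*} [Fintype n] [DecidableEq n] [Field K] [PartialOrder K] [StarRing K]
  {s h : Matrix n n K}

theorem isUnit_one_sub (hh : IsStrictContraction s h) : IsUnit (1 - h) := by
  refine mulVec_injective_iff_isUnit.mp <| (injective_iff_map_eq_zero (1 - h).mulVecLin).mpr ?_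
  intro x hx
  have fixed : h *ᵥ x = x := by
    simpa [sub_mulVec, sub_eq_zero, eq_comm] using hx
  by_contra hx0
  simpa [fixed] using hh.sub_dotProduct_mulVec_pos hx0

theorem isUnit_form (hs : s.IsHermitian) (hh : IsStrictContraction s h) : IsUnit s := by
  refine mulVec_injective_iff_isUnit.mp <| (injective_iff_map_eq_zero s.mulVecLin).mpr ?_
  intro x (hx : s *ᵥ x = 0)
  obtain ⟨y, rfl⟩ := (mulVec_surjective_iff_isUnit.mpr hh.isUnit_one_sub) x
  have form_eq : s *ᵥ (h *ᵥ y) = s *ᵥ y := by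
    simpa [sub_mulVec, mulVec_sub, sub_eq_zero, eq_comm] using hx
  have form_diff_eq_zero :
      star y ⬝ᵥ (s *ᵥ y) - star (h *ᵥ y) ⬝ᵥ (s *ᵥ (h *ᵥ y)) = 0 := by
    calc star y ⬝ᵥ (s *ᵥ y) - star (h *ᵥ y) ⬝ᵥ (s *ᵥ (h *ᵥ y))
        = star ((1 - h) *ᵥ y) ⬝ᵥ (s *ᵥ y) := by
          rw [form_eq, sub_mulVec, one_mulVec, star_sub, sub_dotProduct]
      _ = star (s *ᵥ ((1 - h) *ᵥ y)) ⬝ᵥ y := by rw [star_mulVec s, hs.eq, dotProduct_mulVec]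
      _ = 0 := by rw [hx, star_zero, zero_dotProduct]
  by_contra hy
  have y_ne_zero : y ≠ 0 := by
    rintro rfl
    exact hy (mulVec_zero _)
  exact (hh.sub_dotProduct_mulVec_pos y_ne_zero).ne' form_diff_eq_zero

theorem conjTranspose (hs : s.IsHermitian) (hh : IsStrictContraction s h) :
    IsStrictContraction s⁻¹ hᴴ := by
  obtain ⟨u, hu⟩ := hh.isUnit_one_sub
  obtain ⟨s, rfl⟩ := hh.isUnit_form hs
  have congruence := inv_sub_mul_inv_mul_star_eq_conjugate (Units.ext hs.eq : star s = s) hu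
  rw [IsStrictContraction, conjTranspose_conjTranspose, ← coe_units_inv, ← star_eq_conjTranspose,
    congruence]
  exact (IsUnit.posDef_star_right_conjugate_iff (Units.isUnit _)).mpr hh

theorem posDef_sub_mul (hs : s.IsHermitian) (hh : IsStrictContraction s h) :
    (s - s * (h * s⁻¹ * hᴴ * s)).PosDef := by
  have s_unit := hh.isUnit_form hs
  have conjugated := (IsUnit.posDef_star_left_conjugate_iff s_unit).mpr (hh.conjTranspose hs)
  rwa [hs.star_eq, conjTranspose_conjTranspose, mul_sub, sub_mul,
    mul_nonsing_inv s ((isUnit_iff_isUnit_det s).mp s_unit), one_mul,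
    mul_assoc] at conjugated

theorem one_sub_eigenvalue_mul_pos (hs : s.IsHermitian) (hh : IsStrictContraction s h)
    {v : n → K} (hv : v ≠ 0) {lam : K} (heig : (h * s⁻¹ * hᴴ * s) *ᵥ v = lam • v) :
    0 < (1 - lam) * (star v ⬝ᵥ (s *ᵥ v)) := by
  have pos := (hh.posDef_sub_mul hs).dotProduct_mulVec_pos hv
  rwa [sub_mulVec, ← mulVec_mulVec, heig, mulVec_smul, dotProduct_sub, dotProduct_smul,
    smul_eq_mul, ← one_sub_mul] at pos

end Field

end IsStrictContraction

theorem M0_eigenvalue_real_general {n 𝕜 : Type*} [Fintype n] [DecidableEq n] [RCLike 𝕜]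
    {s h : Matrix n n 𝕜} (hs : s.IsHermitian) (hh : (s - hᴴ * s * h).PosDef)
    {v : n → 𝕜} (hv : v ≠ 0) {lam : 𝕜} (heig : (h * s⁻¹ * hᴴ * s) *ᵥ v = lam • v) :
    RCLike.im lam = 0 ∧ lam ≠ 1 ∧ star v ⬝ᵥ (s *ᵥ v) ≠ 0 ∧
      (0 < RCLike.re (star v ⬝ᵥ (s *ᵥ v)) → RCLike.re lam < 1) ∧
      (RCLike.re (star v ⬝ᵥ (s *ᵥ v)) < 0 → 1 < RCLike.re lam) := by
  have pos := IsStrictContraction.one_sub_eigenvalue_mul_pos hs hh hv heig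
  have form_ne_zero : star v ⬝ᵥ (s *ᵥ v) ≠ 0 := right_ne_zero_of_mul pos.ne'
  have lam_ne_one : lam ≠ 1 := (sub_ne_zero.mp (left_ne_zero_of_mul pos.ne')).symm
  have form_im : RCLike.im (star v ⬝ᵥ (s *ᵥ v)) = 0 := hs.im_star_dotProduct_mulVec_self v
  have form_re_ne_zero : RCLike.re (star v ⬝ᵥ (s *ᵥ v)) ≠ 0 := fun re_eq_zero =>
    form_ne_zero <| RCLike.ext (by rw [re_eq_zero, map_zero]) (by rw [form_im, map_zero])
  obtain ⟨re_pos, im_eq_zero⟩ := RCLike.pos_iff.mp pos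
  simp only [RCLike.mul_re, RCLike.mul_im, form_im, mul_zero, sub_zero, zero_add, map_sub,
    RCLike.one_re, RCLike.one_im, zero_sub] at re_pos im_eq_zero
  refine ⟨by simpa [form_re_ne_zero] using im_eq_zero, lam_ne_one, form_ne_zero,
    fun form_pos => ?_, fun form_neg => ?_⟩
  · exact sub_pos.mp (pos_of_mul_pos_left re_pos form_pos.le)
  · exact sub_neg.mp (neg_of_mul_pos_left re_pos form_neg.le)

theorem isHermitian_sMat (p q : ℕ) : (sMat p q).IsHermitian :=
  isHermitian_diagonal_iff.mpr fun i => by split_ifs <;> simp [isSelfAdjoint_iff]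

theorem inv_sMat (p q : ℕ) : (sMat p q)⁻¹ = sMat p q := by
  refine inv_eq_right_inv ?_
  rw [sMat, diagonal_mul_diagonal, ← diagonal_one]
  congr 1 with i
  split_ifs <;> norm_num

/-- Eigenvalue analysis from the proof of Lemma 4.13: any eigenvalue `λ` of
`m = h s h† s` (for `h ∈ H_{p,q}`) is real, `λ ≠ 1`, the eigenvector `v`
satisfies `v†sv ≠ 0`, and the sign of `v†sv` controls whether `λ < 1` or
`λ > 1`. -/
theorem M0_eigenvalue_real (p q : ℕ) (hp : 1 ≤ p) (hq : 1 ≤ q)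
    (h : Matrix (Fin (p + q)) (Fin (p + q)) ℂ)
    (hh : (sMat p q - hᴴ * sMat p q * h).PosDef)
    (v : Fin (p + q) → ℂ) (hv : v ≠ 0) (lam : ℂ)
    (heig : (h * sMat p q * hᴴ * sMat p q) *ᵥ v = lam • v) :
    lam.im = 0 ∧ lam ≠ 1 ∧ (star v ⬝ᵥ (sMat p q *ᵥ v)) ≠ 0 ∧
      (0 < (star v ⬝ᵥ (sMat p q *ᵥ v)).re → lam.re < 1) ∧
      ((star v ⬝ᵥ (sMat p q *ᵥ v)).re < 0 → 1 < lam.re) :=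
  M0_eigenvalue_real_general (isHermitian_sMat p q) hh hv (by rwa [inv_sMat])
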